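/- For every well-formed acyclic net AN, the places, transitions, and flow relation of AN are covered by its scenarios: P_AN = ⋃{P_ON | ON ∈ scenarios(AN)}, T_AN = ⋃{T_ON | ON ∈ scenarios(AN)}, and F_AN = ⋃{F_ON | ON ∈ scenarios(AN)}. -/

import Mathlib

/-- A net: a triple of places, transitions, and a flow relation. -/
structure Net (α : Type*) where
  places : Set α
  transitions : Set α
  flow : α → α → Prop

namespace Net

variable {α : Type*}

/-- The set of direct predecessors (preset) of a node. -/
def pre (N : Net α) (x : α) : Set α := {z | N.flow z x}

/-- The set of direct successors (postset) of a node. -/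
def post (N : Net α) (x : α) : Set α := {z | N.flow x z}

/-- Preset of a set of nodes. -/
def preSet (N : Net α) (X : Set α) : Set α := ⋃ x ∈ X, N.pre x

/-- Postset of a set of nodes. -/
def postSet (N : Net α) (X : Set α) : Set α := ⋃ x ∈ X, N.post x

/-- Initial places: places with empty preset. -/
def initPlaces (N : Net α) : Set α := {p ∈ N.places | N.pre p = ∅}

/-- Final places: places with empty postset. -/
def finPlaces (N : Net α) : Set α := {p ∈ N.places | N.post p = ∅}

/-- An acyclic net: places and transitions are disjoint finite sets, places nonempty,
the flow relation relates only places to transitions and vice versa, is acyclic, and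
every transition has at least one pre-place and one post-place. -/
def IsAcyclicNet (N : Net α) : Prop :=
  N.places.Finite ∧ N.transitions.Finite ∧
  Disjoint N.places N.transitions ∧
  (∀ x y, N.flow x y →
    (x ∈ N.places ∧ y ∈ N.transitions) ∨ (x ∈ N.transitions ∧ y ∈ N.places)) ∧
  N.places.Nonempty ∧
  (∀ x, ¬ Relation.TransGen N.flow x x) ∧
  (∀ t ∈ N.transitions, (N.pre t).Nonempty ∧ (N.post t).Nonempty)

/-- An occurrence net: an acyclic net with `|pre p| ≤ 1` and `|post p| ≤ 1` for each place. -/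
def IsOccurrenceNet (N : Net α) : Prop :=
  IsAcyclicNet N ∧ ∀ p ∈ N.places, (N.pre p).Subsingleton ∧ (N.post p).Subsingleton

/-- A backward deterministic acyclic net: an acyclic net with `|pre p| ≤ 1` for each place. -/
def IsBDAN (N : Net α) : Prop :=
  IsAcyclicNet N ∧ ∀ p ∈ N.places, (N.pre p).Subsingleton

/-- `N` is a subnet of `M`: nonempty set of places included, transitions included,
flow is the restriction of that of `M`, and every transition of `N` retains its
full preset and postset from `M`. -/
def IsSubnet (N M : Net α) : Prop :=
  N.places.Nonempty ∧ N.places ⊆ M.places ∧ N.transitions ⊆ M.transitions ∧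
  (∀ x y, N.flow x y ↔ M.flow x y ∧
    ((x ∈ N.places ∧ y ∈ N.transitions) ∨ (x ∈ N.transitions ∧ y ∈ N.places))) ∧
  (∀ t ∈ N.transitions, N.pre t = M.pre t ∧ N.post t = M.post t)

/-- `N` is a co-initial subnet of `M` : a subnet with the same initial places. -/
def CoInitial (N M : Net α) : Prop := IsSubnet N M ∧ N.initPlaces = M.initPlaces

/-- A step: a nonempty set of transitions with pairwise disjoint presets. -/
def IsStep (N : Net α) (U : Set α) : Prop :=
  U.Nonempty ∧ U ⊆ N.transitions ∧ ∀ t ∈ U, ∀ u ∈ U, t ≠ u → N.pre t ∩ N.pre u = ∅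

/-- A step `U` is enabled at marking `M` if all its pre-places are in `M`. -/
def Enabled (N : Net α) (M U : Set α) : Prop := IsStep N U ∧ N.preSet U ⊆ M

/-- Executing an enabled step `U` at `M` yields `M' = (M ∪ post U) \ pre U`. -/
def StepTrans (N : Net α) (M U M' : Set α) : Prop :=
  Enabled N M U ∧ M' = (M ∪ N.postSet U) \ N.preSet U

/-- Step sequences from a marking to a marking. -/
inductive StepSeqFrom (N : Net α) : Set α → List (Set α) → Set α → Prop
  | nil (M : Set α) : StepSeqFrom N M [] M
  | cons {M U M' σ M''} : StepTrans N M U M' → StepSeqFrom N M' σ M'' →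
      StepSeqFrom N M (U :: σ) M''

/-- The initial marking: the set of initial places. -/
def initMarking (N : Net α) : Set α := N.initPlaces

/-- Step sequences executable from the initial marking. -/
def sseq (N : Net α) : Set (List (Set α)) := {σ | ∃ M, StepSeqFrom N N.initMarking σ M}

/-- Mixed step sequences: alternating steps and resulting markings from a marking. -/
inductive MixFrom (N : Net α) : Set α → List (Set α × Set α) → Prop
  | nil (M : Set α) : MixFrom N M []
  | cons {M U M' l} : StepTrans N M U M' → MixFrom N M' l → MixFrom N M ((U, M') :: l)

/-- Mixed step sequences from the initial marking, represented as the initial marking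
paired with the list of consecutive (step, marking) pairs. -/
def mixsseq (N : Net α) : Set (Set α × List (Set α × Set α)) :=
  {p | p.1 = N.initMarking ∧ MixFrom N p.1 p.2}

/-- Markings reachable from the initial marking. -/
def reach (N : Net α) : Set (Set α) := {M | ∃ σ, StepSeqFrom N N.initMarking σ M}

/-- Firing sequences: step sequences all of whose steps are singletons. -/
def fseq (N : Net α) : Set (List (Set α)) :=
  {σ | σ ∈ N.sseq ∧ ∀ U ∈ σ, ∃ t, U = {t}}

/-- Maximal step sequences: no step can be appended. -/
def maxsseq (N : Net α) : Set (List (Set α)) :=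
  {σ | σ ∈ N.sseq ∧ ¬ ∃ U, σ ++ [U] ∈ N.sseq}

/-- Maximal mixed step sequences: no step and marking can be appended. -/
def maxmixsseq (N : Net α) : Set (Set α × List (Set α × Set α)) :=
  {p | p ∈ N.mixsseq ∧ ¬ ∃ U M, (p.1, p.2 ++ [(U, M)]) ∈ N.mixsseq}

/-- Final reachable markings: markings reached by maximal step sequences. -/
def finreach (N : Net α) : Set (Set α) :=
  {M | ∃ σ ∈ N.maxsseq, StepSeqFrom N N.initMarking σ M}

/-- A step sequence is well-formed if post-sets of distinct transitions in the same
step are disjoint, and post-sets of distinct steps are disjoint. -/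
def WellFormedSeq (N : Net α) (σ : List (Set α)) : Prop :=
  (∀ U ∈ σ, ∀ t ∈ U, ∀ u ∈ U, t ≠ u → N.post t ∩ N.post u = ∅) ∧
  σ.Pairwise (fun U V => N.postSet U ∩ N.postSet V = ∅)

/-- The set of transitions occurring in a step sequence. -/
def transOf (σ : List (Set α)) : Set α := {t | ∃ U ∈ σ, t ∈ U}

/-- A net is well-formed if each transition occurs in at least one step sequence and
all step sequences are well-formed. -/
def WellFormedNet (N : Net α) : Prop :=
  (∀ t ∈ N.transitions, ∃ σ ∈ N.sseq, t ∈ transOf σ) ∧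
  (∀ σ ∈ N.sseq, N.WellFormedSeq σ)

/-- Scenarios of a net: occurrence nets that are co-initial subnets of it. -/
def scenarios (N : Net α) : Set (Net α) :=
  {S | IsOccurrenceNet S ∧ CoInitial S N}

/-- Maximal scenarios: scenarios not strictly included (co-initially) in another scenario. -/
def maxscenarios (N : Net α) : Set (Net α) :=
  {S | S ∈ N.scenarios ∧ ¬ ∃ S', S' ∈ N.scenarios ∧ S' ≠ S ∧ CoInitial S S'}

/-- The scenario induced by a (well-formed) step sequence `σ`:
transitions are those occurring in `σ`, places are the initial places together with
the postsets of those transitions, and the flow is the restriction. -/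
def inducedScenario (N : Net α) (σ : List (Set α)) : Net α where
  places := N.initMarking ∪ N.postSet (transOf σ)
  transitions := transOf σ
  flow := fun x y => N.flow x y ∧
    ((x ∈ N.initMarking ∪ N.postSet (transOf σ) ∧ y ∈ transOf σ) ∨
     (x ∈ transOf σ ∧ y ∈ N.initMarking ∪ N.postSet (transOf σ)))

end Net

/-! Every transition of `N` occurs in a well-formed step sequence `σ`, and `σ` induces a scenario.
Indeed, well-formedness means that no place is marked twice while `σ` is executed, so no place is
consumed twice either: the transitions of `σ` have pairwise disjoint postsets and pairwise disjoint
presets, and every place they consume is initial or was produced earlier in `σ`. Since every arc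
has a transition at one end, and since every scenario contains the initial places, scenarios
through all the transitions cover the whole net. -/

namespace Net

variable {α : Type*} {N S : Net α} {M M' T U : Set α} {σ : List (Set α)} {p t x y : α}

theorem mem_initPlaces : p ∈ N.initPlaces ↔ p ∈ N.places ∧ ∀ t, ¬ N.flow t p := by
  simp [initPlaces, pre, Set.eq_empty_iff_forall_notMem]

theorem mem_postSet : p ∈ N.postSet T ↔ ∃ t ∈ T, N.flow t p := by
  simp [postSet, post]

theorem pre_subset_preSet (ht : t ∈ T) : N.pre t ⊆ N.preSet T :=
  Set.subset_biUnion_of_mem ht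

theorem post_subset_postSet (ht : t ∈ T) : N.post t ⊆ N.postSet T :=
  Set.subset_biUnion_of_mem ht

theorem preSet_union : N.preSet (T ∪ U) = N.preSet T ∪ N.preSet U :=
  Set.biUnion_union T U _

theorem postSet_union : N.postSet (T ∪ U) = N.postSet T ∪ N.postSet U :=
  Set.biUnion_union T U _

theorem disjoint_initPlaces_postSet : Disjoint N.initPlaces (N.postSet T) := by
  refine Set.disjoint_left.2 fun p hinit hpost => ?_
  obtain ⟨t, -, htp⟩ := mem_postSet.1 hpost
  exact (mem_initPlaces.1 hinit).2 t htp

theorem pairwiseDisjoint_pre_union (hT : T.PairwiseDisjoint N.pre) (hU : U.PairwiseDisjoint N.pre)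
    (hTU : Disjoint (N.preSet T) (N.preSet U)) : (T ∪ U).PairwiseDisjoint N.pre :=
  Set.pairwiseDisjoint_union.2 ⟨hT, hU, fun _ ht _ hu _ =>
    hTU.mono (pre_subset_preSet ht) (pre_subset_preSet hu)⟩

theorem pairwiseDisjoint_post_union (hT : T.PairwiseDisjoint N.post)
    (hU : U.PairwiseDisjoint N.post) (hTU : Disjoint (N.postSet T) (N.postSet U)) :
    (T ∪ U).PairwiseDisjoint N.post :=
  Set.pairwiseDisjoint_union.2 ⟨hT, hU, fun _ ht _ hu _ =>
    hTU.mono (post_subset_postSet ht) (post_subset_postSet hu)⟩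

theorem transOf_nil : transOf ([] : List (Set α)) = ∅ := by
  simp [transOf]

theorem transOf_cons : transOf (U :: σ) = U ∪ transOf σ := by
  ext t
  simp [transOf]

theorem postSet_transOf : N.postSet (transOf σ) = ⋃ U ∈ σ, N.postSet U := by
  ext p
  simp only [transOf, mem_postSet, Set.mem_iUnion, Set.mem_ofPred_eq]
  grind

namespace IsAcyclicNet

theorem pre_subset_places (h : N.IsAcyclicNet) (ht : t ∈ N.transitions) :
    N.pre t ⊆ N.places := by
  obtain ⟨-, -, hdisj, hflow, -⟩ := h
  intro p hp
  rcases hflow p t hp with ⟨hpP, -⟩ | ⟨-, htP⟩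
  · exact hpP
  · exact absurd ht (Set.disjoint_left.1 hdisj htP)

theorem post_subset_places (h : N.IsAcyclicNet) (ht : t ∈ N.transitions) :
    N.post t ⊆ N.places := by
  obtain ⟨-, -, hdisj, hflow, -⟩ := h
  intro p hp
  rcases hflow t p hp with ⟨htP, -⟩ | ⟨-, hpP⟩
  · exact absurd ht (Set.disjoint_left.1 hdisj htP)
  · exact hpP

theorem pre_subset_transitions (h : N.IsAcyclicNet) (hp : p ∈ N.places) :
    N.pre p ⊆ N.transitions := by
  obtain ⟨-, -, hdisj, hflow, -⟩ := h
  intro t ht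
  rcases hflow t p ht with ⟨-, hpT⟩ | ⟨htT, -⟩
  · exact absurd hpT (Set.disjoint_left.1 hdisj hp)
  · exact htT

theorem post_subset_transitions (h : N.IsAcyclicNet) (hp : p ∈ N.places) :
    N.post p ⊆ N.transitions := by
  obtain ⟨-, -, hdisj, hflow, -⟩ := h
  intro t ht
  rcases hflow p t ht with ⟨-, htT⟩ | ⟨hpT, -⟩
  · exact htT
  · exact absurd hpT (Set.disjoint_left.1 hdisj hp)

theorem postSet_subset_places (h : N.IsAcyclicNet) (hT : T ⊆ N.transitions) :
    N.postSet T ⊆ N.places :=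
  Set.iUnion₂_subset fun _ ht => h.post_subset_places (hT ht)

theorem initPlaces_nonempty (h : N.IsAcyclicNet) : N.initPlaces.Nonempty := by
  have ⟨hfin, _, _, _, ⟨p₀, hp₀⟩, hacyc, htrans⟩ := h
  have : IsStrictOrder α (Relation.TransGen N.flow) := { irrefl := hacyc }
  have hwf : N.places.WellFoundedOn (Relation.TransGen N.flow) := hfin.wellFoundedOn
  obtain ⟨⟨p, hp⟩, -, hmin⟩ := hwf.has_min Set.univ ⟨⟨p₀, hp₀⟩, trivial⟩
  refine ⟨p, mem_initPlaces.2 ⟨hp, fun t htp => ?_⟩⟩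
  have ht : t ∈ N.transitions := h.pre_subset_transitions hp htp
  obtain ⟨q, hqt⟩ := (htrans t ht).1
  exact hmin ⟨q, h.pre_subset_places ht hqt⟩ trivial (.tail (.single hqt) htp)

theorem isOccurrenceNet (h : N.IsAcyclicNet) (hpre : N.transitions.PairwiseDisjoint N.pre)
    (hpost : N.transitions.PairwiseDisjoint N.post) : N.IsOccurrenceNet :=
  ⟨h, fun p hp =>
    ⟨fun _ ht _ hu => hpost.elim_set (h.pre_subset_transitions hp ht)
        (h.pre_subset_transitions hp hu) p ht hu,
      fun _ ht _ hu => hpre.elim_set (h.post_subset_transitions hp ht)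
        (h.post_subset_transitions hp hu) p ht hu⟩⟩

end IsAcyclicNet

namespace IsSubnet

theorem flow_of_flow (hS : S.IsSubnet N) (hxy : S.flow x y) : N.flow x y :=
  ((hS.2.2.2.1 x y).1 hxy).1

theorem pre_eq (hS : S.IsSubnet N) (ht : t ∈ S.transitions) : S.pre t = N.pre t :=
  (hS.2.2.2.2 t ht).1

theorem post_eq (hS : S.IsSubnet N) (ht : t ∈ S.transitions) : S.post t = N.post t :=
  (hS.2.2.2.2 t ht).2

theorem isAcyclicNet (hS : S.IsSubnet N) (h : N.IsAcyclicNet) : S.IsAcyclicNet := by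
  have ⟨hne, hplaces, htransitions, hflow, _⟩ := hS
  obtain ⟨hfinP, hfinT, hdisj, -, -, hacyc, htrans⟩ := h
  refine ⟨hfinP.subset hplaces, hfinT.subset htransitions, hdisj.mono hplaces htransitions,
    fun x y hxy => ((hflow x y).1 hxy).2, hne, fun x hx => hacyc x ?_, fun t ht => ?_⟩
  · exact Relation.TransGen.mono (fun _ _ => hS.flow_of_flow) _ _ hx
  · rw [hS.pre_eq ht, hS.post_eq ht]
    exact htrans t (htransitions ht)

theorem coInitial (hS : S.IsSubnet N)
    (hplaces : S.places = N.initPlaces ∪ N.postSet S.transitions) : S.CoInitial N := by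
  refine ⟨hS, Set.ext fun p => ?_⟩
  rw [mem_initPlaces (N := S), hplaces]
  constructor
  · rintro ⟨hinit | hpost, hsource⟩
    · exact hinit
    · obtain ⟨t, ht, htp⟩ := mem_postSet.1 hpost
      exact absurd ((hS.post_eq ht).ge htp) (hsource t)
  · exact fun hinit =>
      ⟨.inl hinit, fun t htp => (mem_initPlaces.1 hinit).2 t (hS.flow_of_flow htp)⟩

end IsSubnet

theorem wellFormedSeq_cons : N.WellFormedSeq (U :: σ) ↔
    U.PairwiseDisjoint N.post ∧ Disjoint (N.postSet U) (N.postSet (transOf σ)) ∧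
      N.WellFormedSeq σ := by
  have hstep : U.PairwiseDisjoint N.post ↔
      ∀ t ∈ U, ∀ u ∈ U, t ≠ u → N.post t ∩ N.post u = ∅ := by
    simp only [Set.PairwiseDisjoint, Set.Pairwise, Function.onFun,
      Set.disjoint_iff_inter_eq_empty]
  have hlater : Disjoint (N.postSet U) (N.postSet (transOf σ)) ↔
      ∀ V ∈ σ, N.postSet U ∩ N.postSet V = ∅ := by
    simp only [← Set.disjoint_iff_inter_eq_empty, postSet_transOf, Set.disjoint_iUnion_right]
  rw [hstep, hlater, WellFormedSeq, WellFormedSeq, List.forall_mem_cons, List.pairwise_cons]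
  tauto

theorem WellFormedSeq.pairwiseDisjoint_post (hwf : N.WellFormedSeq σ) :
    (transOf σ).PairwiseDisjoint N.post := by
  induction σ with
  | nil => simp only [transOf_nil, Set.pairwiseDisjoint_empty]
  | cons U σ ih =>
    obtain ⟨hU, hUσ, hwf⟩ := wellFormedSeq_cons.1 hwf
    rw [transOf_cons]
    exact pairwiseDisjoint_post_union hU (ih hwf) hUσ

theorem IsStep.pairwiseDisjoint_pre (hU : N.IsStep U) : U.PairwiseDisjoint N.pre :=
  fun t ht u hu htu => Set.disjoint_iff_inter_eq_empty.2 (hU.2.2 t ht u hu htu)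

namespace StepSeqFrom

theorem transOf_subset_transitions (hs : N.StepSeqFrom M σ M') :
    transOf σ ⊆ N.transitions := by
  induction hs with
  | nil => simp only [transOf_nil, Set.empty_subset]
  | cons hstep _ ih =>
    rw [transOf_cons]
    exact Set.union_subset hstep.1.1.2.1 ih

theorem preSet_subset (hs : N.StepSeqFrom M σ M') :
    N.preSet (transOf σ) ⊆ M ∪ N.postSet (transOf σ) := by
  induction hs with
  | nil => simp only [transOf_nil, preSet, Set.biUnion_empty, Set.empty_subset]
  | cons hstep _ ih =>
    obtain ⟨⟨-, henabled⟩, rfl⟩ := hstep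
    rw [transOf_cons, preSet_union, postSet_union, ← Set.union_assoc]
    exact Set.union_subset (henabled.trans (by grind))
      (ih.trans (Set.union_subset_union_left _ Set.sdiff_subset))

theorem pairwiseDisjoint_pre (hs : N.StepSeqFrom M σ M') (hwf : N.WellFormedSeq σ)
    (hM : Disjoint M (N.postSet (transOf σ))) : (transOf σ).PairwiseDisjoint N.pre := by
  induction hs with
  | nil => simp only [transOf_nil, Set.pairwiseDisjoint_empty]
  | @cons M U M₁ σ _ hstep hs ih =>
    obtain ⟨⟨hU, henabled⟩, rfl⟩ := hstep
    obtain ⟨-, hUσ, hwf⟩ := wellFormedSeq_cons.1 hwf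
    rw [transOf_cons, postSet_union, Set.disjoint_union_right] at hM
    have hM₁ : Disjoint ((M ∪ N.postSet U) \ N.preSet U) (N.postSet (transOf σ)) :=
      (hM.2.union_left hUσ).mono_left Set.sdiff_subset
    -- Executing `U` consumes its pre-places, and no later step marks them again.
    have hUσ_pre : Disjoint (N.preSet U) (N.preSet (transOf σ)) :=
      (Set.disjoint_sdiff_right.union_right (hM.2.mono_left henabled)).mono_right hs.preSet_subset
    rw [transOf_cons]
    exact pairwiseDisjoint_pre_union hU.pairwiseDisjoint_pre (ih hwf hM₁) hUσ_pre

end StepSeqFrom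

theorem isSubnet_inducedScenario (h : N.IsAcyclicNet) (hσ : σ ∈ N.sseq) :
    (N.inducedScenario σ).IsSubnet N := by
  obtain ⟨M, hs⟩ := hσ
  refine ⟨h.initPlaces_nonempty.mono Set.subset_union_left,
    Set.union_subset (fun p hp => hp.1) (h.postSet_subset_places hs.transOf_subset_transitions),
    hs.transOf_subset_transitions, fun _ _ => Iff.rfl, fun t ht => ⟨?_, ?_⟩⟩
  · exact Set.Subset.antisymm (fun _ hpt => hpt.1) fun _ hpt =>
      ⟨hpt, .inl ⟨hs.preSet_subset (pre_subset_preSet ht hpt), ht⟩⟩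
  · exact Set.Subset.antisymm (fun _ htp => htp.1) fun _ htp =>
      ⟨htp, .inr ⟨ht, .inr (post_subset_postSet ht htp)⟩⟩

theorem inducedScenario_mem_scenarios (h : N.IsAcyclicNet) (hσ : σ ∈ N.sseq)
    (hwf : N.WellFormedSeq σ) : N.inducedScenario σ ∈ N.scenarios := by
  have hsub := isSubnet_inducedScenario h hσ
  obtain ⟨M, hs⟩ := hσ
  have hpre := hs.pairwiseDisjoint_pre hwf disjoint_initPlaces_postSet
  exact ⟨(hsub.isAcyclicNet h).isOccurrenceNet (hpre.mono fun _ _ hpt => hpt.1)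
    (hwf.pairwiseDisjoint_post.mono fun _ _ htp => htp.1), hsub.coInitial rfl⟩

theorem scenarios_nonempty (h : N.IsAcyclicNet) : N.scenarios.Nonempty :=
  ⟨N.inducedScenario [], inducedScenario_mem_scenarios h ⟨_, .nil _⟩ (by simp [WellFormedSeq])⟩

theorem exists_scenario_flow (h : N.IsAcyclicNet)
    (hcover : ∀ t ∈ N.transitions, ∃ S ∈ N.scenarios, t ∈ S.transitions) (hxy : N.flow x y) :
    ∃ S ∈ N.scenarios, S.flow x y := by
  obtain ⟨-, -, -, hflow, -⟩ := h
  rcases hflow x y hxy with ⟨-, hy⟩ | ⟨hx, -⟩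
  · obtain ⟨S, hS, hyS⟩ := hcover y hy
    exact ⟨S, hS, (hS.2.1.pre_eq hyS).ge hxy⟩
  · obtain ⟨S, hS, hxS⟩ := hcover x hx
    exact ⟨S, hS, (hS.2.1.post_eq hxS).ge hxy⟩

theorem exists_scenario_mem_places (h : N.IsAcyclicNet)
    (hcover : ∀ t ∈ N.transitions, ∃ S ∈ N.scenarios, t ∈ S.transitions) (hp : p ∈ N.places) :
    ∃ S ∈ N.scenarios, p ∈ S.places := by
  by_cases hinit : p ∈ N.initPlaces
  · obtain ⟨S, hS⟩ := scenarios_nonempty h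
    have hinitS : p ∈ S.initPlaces := hS.2.2.ge hinit
    exact ⟨S, hS, hinitS.1⟩
  · obtain ⟨t, htp⟩ : ∃ t, N.flow t p := by
      simpa [mem_initPlaces, hp] using hinit
    obtain ⟨S, hS, htS⟩ := hcover t (h.pre_subset_transitions hp htp)
    exact ⟨S, hS, hS.1.1.post_subset_places htS ((hS.2.1.post_eq htS).ge htp)⟩

end Net

theorem stmt18_general {α : Type*} (N : Net α) (h : N.IsAcyclicNet)
    (hocc : ∀ t ∈ N.transitions, ∃ σ ∈ N.sseq, N.WellFormedSeq σ ∧ t ∈ Net.transOf σ) :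
    N.places = (⋃ S ∈ N.scenarios, S.places) ∧
    N.transitions = (⋃ S ∈ N.scenarios, S.transitions) ∧
    (∀ x y, N.flow x y ↔ ∃ S ∈ N.scenarios, S.flow x y) := by
  have hcover : ∀ t ∈ N.transitions, ∃ S ∈ N.scenarios, t ∈ S.transitions := fun t ht =>
    have ⟨_, hσ, hwf, htσ⟩ := hocc t ht
    ⟨_, Net.inducedScenario_mem_scenarios h hσ hwf, htσ⟩
  refine ⟨Set.Subset.antisymm (fun p hp => ?_) ?_, Set.Subset.antisymm (fun t ht => ?_) ?_,
    fun x y => ⟨Net.exists_scenario_flow h hcover, ?_⟩⟩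
  · simpa only [Set.mem_iUnion, exists_prop] using Net.exists_scenario_mem_places h hcover hp
  · exact Set.iUnion₂_subset fun S ⟨_, ⟨_, hplaces, _⟩, _⟩ => hplaces
  · simpa only [Set.mem_iUnion, exists_prop] using hcover t ht
  · exact Set.iUnion₂_subset fun S ⟨_, ⟨_, _, htransitions, _⟩, _⟩ => htransitions
  · exact fun ⟨_, hS, hxy⟩ => hS.2.1.flow_of_flow hxy

/-- For every well-formed acyclic net, its places, transitions and flow
relation are covered by its scenarios. -/
theorem stmt18 {α : Type*} (N : Net α) (h : N.IsAcyclicNet) (hwf : N.WellFormedNet) :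
    N.places = (⋃ S ∈ N.scenarios, S.places) ∧
    N.transitions = (⋃ S ∈ N.scenarios, S.transitions) ∧
    (∀ x y, N.flow x y ↔ ∃ S ∈ N.scenarios, S.flow x y) := by
  exact stmt18_general N h fun t ht =>
    have ⟨σ, hσ, htσ⟩ := hwf.1 t ht; ⟨σ, hσ, hwf.2 σ hσ, htσ⟩
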